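/- arXiv:1908.09420 — 3 statements merged into one kernel-verified Lean document; each statement's English description precedes it below -/
import Mathlib

section
/- Let N be an odd perfect number with at least three distinct prime divisors, and let a be its third largest prime divisor. Then a < 2·N^(1/6), i.e., a^6 < 64·N. -/
/-!
Let `d` be the part of `n` supported on a set `S` of `s` odd primes, all at least `a`, and let
`k = n / d`. Since `4 ∤ σ(n)`, at most one prime of `S` has odd exponent in `n`, so
`a ^ (2 * s - 1) ≤ d`. If `σ(n) = σ(d) * σ(k)` were at most `a ^ (2 * s)`, then `d < σ(d)` would
force `σ(k) < a`, so `σ(k)` would be coprime to `d`, and `d ∣ n ∣ σ(n)` would give `d ∣ σ(d)`.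
But then `2 * d ≤ σ(d)`, whereas `σ(d) / d < (a / (a - 1)) ^ s`, which is at most `2` as soon as
`a` is large compared with `s`; for `s = 3` this means `5 ≤ a`.
For `a ≤ 3`, the lower bound for `d` applied to the two larger primes already suffices.
-/

open Finset
open scoped ArithmeticFunction.sigma

section SumOfDivisors

variable {m n p a i r : ℕ}

lemma lt_sigma_one (hn : 1 < n) : n < σ 1 n := by
  rw [ArithmeticFunction.sigma_one_apply, Nat.sum_divisors_eq_sum_properDivisors_add_self]
  have : 0 < ∑ d ∈ n.properDivisors, d :=
    sum_pos (fun _ hd ↦ Nat.pos_of_mem_properDivisors hd)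
      ⟨1, Nat.one_mem_properDivisors_iff_one_lt.2 hn⟩
  lia

lemma two_mul_le_sigma_one_of_dvd (hn : 1 < n) (hdvd : n ∣ σ 1 n) : 2 * n ≤ σ 1 n := by
  obtain ⟨t, ht⟩ := hdvd
  have hlt : n * 1 < n * t := by simpa only [mul_one, ht] using lt_sigma_one hn
  calc 2 * n = n * 2 := mul_comm 2 n
    _ ≤ n * t := Nat.mul_le_mul_left n (lt_of_mul_lt_mul_left' hlt)
    _ = σ 1 n := ht.symm

lemma sigma_one_mul_of_coprime (h : m.Coprime n) : σ 1 (m * n) = σ 1 m * σ 1 n :=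
  ArithmeticFunction.isMultiplicative_sigma.map_mul_of_coprime h

lemma even_sigma_one_prime_pow (hp : p.Prime) (hp_odd : Odd p) (hi : Odd i) :
    Even (σ 1 (p ^ i)) := by
  rw [ArithmeticFunction.sigma_one_apply_prime_pow hp, ← Nat.not_odd_iff_even,
    odd_sum_iff_odd_card_odd, filter_true_of_mem fun _ _ ↦ hp_odd.pow, card_range,
    Nat.not_odd_iff_even]
  exact hi.add_one

lemma pred_mul_sigma_one_prime_pow_lt (hp : p.Prime) (ha : 0 < a) (hap : a ≤ p) :
    (a - 1) * σ 1 (p ^ i) < a * p ^ i := by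
  obtain ⟨b, rfl⟩ := Nat.exists_eq_add_of_le' ha
  rw [Nat.add_sub_cancel, ArithmeticFunction.sigma_one_apply_prime_pow hp]
  induction i with
  | zero => simp
  | succ i ih =>
    calc b * ∑ j ∈ range (i + 1 + 1), p ^ j
        = b * ∑ j ∈ range (i + 1), p ^ j + b * p ^ (i + 1) := by
          rw [sum_range_succ, mul_add]
      _ < (b + 1) * p ^ i + b * p ^ (i + 1) := by gcongr
      _ ≤ p * p ^ i + b * p ^ (i + 1) := by gcongr
      _ = (b + 1) * p ^ (i + 1) := by ring

lemma pow_succ_lt_sigma_one_mul {d k : ℕ} (hcop : d.Coprime k) (hdvd : d * k ∣ σ 1 (d * k))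
    (hd : 1 < d) (hprimes : ∀ q ∈ d.primeFactors, a ≤ q) (hpow : a ^ r ≤ d)
    (hσ : σ 1 d < 2 * d) : a ^ (r + 1) < σ 1 (d * k) := by
  by_contra! hle
  rw [sigma_one_mul_of_coprime hcop] at hdvd hle
  have hk : 0 < k := Nat.pos_of_ne_zero (by rintro rfl; simp_all)
  have hσk : 0 < σ 1 k := ArithmeticFunction.sigma_pos_iff.2 hk
  have hσk_lt : σ 1 k < a := by
    refine lt_of_mul_lt_mul_left' (a := a ^ r) ?_
    calc a ^ r * σ 1 k < σ 1 d * σ 1 k := by gcongr; exact hpow.trans_lt (lt_sigma_one hd)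
      _ ≤ a ^ r * a := by rwa [← pow_succ]
  have hcopσ : d.Coprime (σ 1 k) := Nat.coprime_of_dvd fun q hq hqd hqσ ↦
    ((Nat.le_of_dvd hσk hqσ).trans_lt hσk_lt).not_ge
      (hprimes q (hq.mem_primeFactors hqd (by lia)))
  have hdσ : d ∣ σ 1 d := hcopσ.dvd_of_dvd_mul_right (dvd_of_mul_right_dvd hdvd)
  exact hσ.not_ge (two_mul_le_sigma_one_of_dvd hd hdσ)

end SumOfDivisors

/-- The part of `n` supported on the primes in `S`: the product of the prime powers `p ^ vₚ(n)`
over `p ∈ S`. It is the unitary divisor of `n` with prime divisors `S` when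
`S ⊆ n.primeFactors`. -/
def primesPart (S : Finset ℕ) (n : ℕ) : ℕ := ∏ p ∈ S, p ^ n.factorization p

namespace primesPart

variable {S T : Finset ℕ} {n a p : ℕ}

lemma coprime_of_disjoint (hS : ∀ p ∈ S, p.Prime) (hT : ∀ p ∈ T, p.Prime) (h : Disjoint S T) :
    (primesPart S n).Coprime (primesPart T n) :=
  Nat.Coprime.prod_left fun p hp ↦ Nat.Coprime.prod_right fun q hq ↦
    Nat.coprime_pow_primes _ _ (hS p hp) (hT q hq) (disjoint_left.1 h hp <| · ▸ hq)

lemma exists_coprime_mul_eq (hS : S ⊆ n.primeFactors) (hn : n ≠ 0) :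
    ∃ k, (primesPart S n).Coprime k ∧ primesPart S n * k = n := by
  refine ⟨primesPart (n.primeFactors \ S) n, coprime_of_disjoint
    (fun _ hp ↦ Nat.prime_of_mem_primeFactors (hS hp))
    (fun _ hp ↦ Nat.prime_of_mem_primeFactors (sdiff_subset hp)) disjoint_sdiff, ?_⟩
  rw [mul_comm, primesPart, primesPart, prod_sdiff hS]
  exact Nat.prod_factorization_pow_eq_self hn

lemma mem_of_prime_of_dvd (hS : ∀ p ∈ S, p.Prime) (hp : p.Prime) (hdvd : p ∣ primesPart S n) :
    p ∈ S := by
  obtain ⟨q, hq, hpq⟩ := (hp.prime.dvd_finsetProd_iff _).1 hdvd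
  rwa [(Nat.prime_dvd_prime_iff_eq hp (hS q hq)).1 (hp.dvd_of_dvd_pow hpq)]

lemma pow_sum_factorization_le (haS : ∀ p ∈ S, a ≤ p) :
    a ^ ∑ p ∈ S, n.factorization p ≤ primesPart S n := by
  rw [← prod_pow_eq_pow_sum]
  exact prod_le_prod' fun p hp ↦ Nat.pow_le_pow_left (haS p hp) _

lemma sigma_one (hS : ∀ p ∈ S, p.Prime) :
    σ 1 (primesPart S n) = ∏ p ∈ S, σ 1 (p ^ n.factorization p) :=
  ArithmeticFunction.isMultiplicative_sigma.map_prod _ _ fun _ hp _ hq hpq ↦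
    Nat.coprime_pow_primes _ _ (hS _ hp) (hS _ hq) hpq

lemma sigma_one_dvd (hS : S ⊆ n.primeFactors) (hn : n ≠ 0) :
    σ 1 (primesPart S n) ∣ σ 1 n := by
  obtain ⟨k, hcop, hk⟩ := exists_coprime_mul_eq hS hn
  exact ⟨σ 1 k, by rw [← sigma_one_mul_of_coprime hcop, hk]⟩

lemma pred_pow_card_mul_sigma_one_lt (hS : ∀ p ∈ S, p.Prime) (hne : S.Nonempty) (ha : 1 < a)
    (haS : ∀ p ∈ S, a ≤ p) :
    (a - 1) ^ #S * σ 1 (primesPart S n) < a ^ #S * primesPart S n := by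
  rw [sigma_one hS, primesPart, ← prod_const, ← prod_const, ← prod_mul_distrib,
    ← prod_mul_distrib]
  refine prod_lt_prod_of_nonempty (fun p hp ↦ ?_)
    (fun p hp ↦ pred_mul_sigma_one_prime_pow_lt (hS p hp) (by lia) (haS p hp)) hne
  exact Nat.mul_pos (by lia) (ArithmeticFunction.sigma_pos _ _ (pow_ne_zero _ (hS p hp).ne_zero))

end primesPart

section NotFourDvdSigma

variable {S : Finset ℕ} {n a p : ℕ}

lemma two_pow_card_dvd_sigma_one (hS : S ⊆ n.primeFactors) (hn : n ≠ 0)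
    (hodd : ∀ p ∈ S, Odd p) (hexp : ∀ p ∈ S, Odd (n.factorization p)) : 2 ^ #S ∣ σ 1 n := by
  have hprime : ∀ p ∈ S, p.Prime := fun p hp ↦ Nat.prime_of_mem_primeFactors (hS hp)
  refine dvd_trans ?_ (primesPart.sigma_one_dvd hS hn)
  rw [primesPart.sigma_one hprime, ← prod_const]
  exact prod_dvd_prod_of_dvd _ _ fun p hp ↦
    (even_sigma_one_prime_pow (hprime p hp) (hodd p hp) (hexp p hp)).two_dvd

lemma two_mul_card_le_sum_factorization_add_one (hS : S ⊆ n.primeFactors) (hn : n ≠ 0)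
    (hodd : ∀ p ∈ S, Odd p) (h4 : ¬ 4 ∣ σ 1 n) :
    2 * #S ≤ ∑ p ∈ S, n.factorization p + 1 := by
  set O := {p ∈ S | Odd (n.factorization p)}
  have hOcard : #O ≤ 1 := by
    by_contra! htwo
    refine h4 ((pow_dvd_pow 2 htwo).trans (two_pow_card_dvd_sigma_one
      ((filter_subset _ _).trans hS) hn (fun p hp ↦ hodd p (mem_filter.1 hp).1)
      fun p hp ↦ (mem_filter.1 hp).2))
  calc 2 * #S = ∑ p ∈ S, 2 := by rw [sum_const, smul_eq_mul, mul_comm]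
    _ ≤ ∑ p ∈ S, (n.factorization p + if Odd (n.factorization p) then 1 else 0) := by
        refine sum_le_sum fun p hp ↦ ?_
        have hpos : n.factorization p ≠ 0 := Finsupp.mem_support_iff.1 (hS hp)
        split_ifs with hp_exp
        · lia
        · rw [Nat.not_odd_iff_even] at hp_exp
          grind
    _ = ∑ p ∈ S, n.factorization p + #O := by rw [sum_add_distrib, ← card_filter]
    _ ≤ ∑ p ∈ S, n.factorization p + 1 := by gcongr

lemma pow_two_mul_card_sub_one_le_primesPart (hS : S ⊆ n.primeFactors) (hn : n ≠ 0)
    (hodd : ∀ p ∈ S, Odd p) (ha : 0 < a) (haS : ∀ p ∈ S, a ≤ p) (h4 : ¬ 4 ∣ σ 1 n) :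
    a ^ (2 * #S - 1) ≤ primesPart S n :=
  calc a ^ (2 * #S - 1) ≤ a ^ ∑ p ∈ S, n.factorization p := Nat.pow_le_pow_right ha <|
        Nat.sub_le_of_le_add (two_mul_card_le_sum_factorization_add_one hS hn hodd h4)
    _ ≤ primesPart S n := primesPart.pow_sum_factorization_le haS

theorem pow_two_mul_card_lt_sigma_one (hS : S ⊆ n.primeFactors) (hne : S.Nonempty)
    (hodd : ∀ p ∈ S, Odd p) (ha : 1 < a) (haS : ∀ p ∈ S, a ≤ p)
    (hsize : a ^ #S ≤ 2 * (a - 1) ^ #S) (hdvd : n ∣ σ 1 n) (h4 : ¬ 4 ∣ σ 1 n) :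
    a ^ (2 * #S) < σ 1 n := by
  have hn : n ≠ 0 := by rintro rfl; exact h4 (by simp)
  have hprime : ∀ p ∈ S, p.Prime := fun p hp ↦ Nat.prime_of_mem_primeFactors (hS hp)
  have hcard : 0 < #S := hne.card_pos
  have hpow : a ^ (2 * #S - 1) ≤ primesPart S n :=
    pow_two_mul_card_sub_one_le_primesPart hS hn hodd (by lia) haS h4
  have hone : 1 < primesPart S n := (Nat.one_lt_pow (by lia) ha).trans_le hpow
  have hσ : σ 1 (primesPart S n) < 2 * primesPart S n := by
    refine lt_of_mul_lt_mul_left' (a := (a - 1) ^ #S) ?_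
    calc (a - 1) ^ #S * σ 1 (primesPart S n) < a ^ #S * primesPart S n :=
          primesPart.pred_pow_card_mul_sigma_one_lt hprime hne ha haS
      _ ≤ 2 * (a - 1) ^ #S * primesPart S n := by gcongr
      _ = (a - 1) ^ #S * (2 * primesPart S n) := by ring
  have hprimes : ∀ q ∈ (primesPart S n).primeFactors, a ≤ q := fun q hq ↦
    haS q (primesPart.mem_of_prime_of_dvd hprime (Nat.prime_of_mem_primeFactors hq)
      (Nat.dvd_of_mem_primeFactors hq))
  obtain ⟨k, hcop, hk⟩ := primesPart.exists_coprime_mul_eq hS hn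
  have hlt := pow_succ_lt_sigma_one_mul hcop (by rwa [hk]) hone hprimes hpow hσ
  rwa [hk, Nat.sub_add_cancel (by lia)] at hlt

lemma two_mul_mul_pow_le_sigma_one (hp : p ∈ n.primeFactors) (hpS : p ∉ S)
    (hS : S ⊆ n.primeFactors) (hodd : ∀ q ∈ S, Odd q) (ha : 0 < a) (haS : ∀ q ∈ S, a ≤ q)
    (hdvd : n ∣ σ 1 n) (h4 : ¬ 4 ∣ σ 1 n) : 2 * (p * a ^ (2 * #S - 1)) ≤ σ 1 n := by
  obtain ⟨hp_prime, hpn, hn⟩ := Nat.mem_primeFactors.1 hp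
  have hle : p * a ^ (2 * #S - 1) ≤ n :=
    calc p * a ^ (2 * #S - 1) ≤ p ^ n.factorization p * primesPart S n :=
          Nat.mul_le_mul (Nat.le_self_pow (Finsupp.mem_support_iff.1 hp) p)
            (pow_two_mul_card_sub_one_le_primesPart hS hn hodd ha haS h4)
      _ = primesPart (insert p S) n := by
          rw [primesPart, primesPart, prod_insert hpS]
      _ ≤ n := by
          obtain ⟨k, -, hk⟩ := primesPart.exists_coprime_mul_eq (insert_subset hp hS) hn
          exact Nat.le_of_dvd (Nat.pos_of_ne_zero hn) (Dvd.intro k hk)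
  have hone : 1 < n := hp_prime.one_lt.trans_le (Nat.le_of_dvd (Nat.pos_of_ne_zero hn) hpn)
  exact (Nat.mul_le_mul_left 2 hle).trans (two_mul_le_sigma_one_of_dvd hone hdvd)

lemma pow_six_lt_sigma_one_of_lt_five (ha : a ∈ n.primeFactors) (ha5 : a < 5)
    (hS : S ⊆ n.primeFactors) (hcard : #S = 2) (haS : ∀ q ∈ S, a < q)
    (hodd : ∀ q ∈ S, Odd q) (hdvd : n ∣ σ 1 n) (h4 : ¬ 4 ∣ σ 1 n) : a ^ 6 < σ 1 n := by
  have ha_prime := Nat.prime_of_mem_primeFactors ha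
  obtain ⟨r, hr, hrS, hlt⟩ : ∃ r, 0 < r ∧ (∀ q ∈ S, r ≤ q) ∧ a ^ 6 < 2 * (a * r ^ 3) := by
    obtain rfl | rfl : a = 2 ∨ a = 3 := by
      have := ha_prime.two_le
      interval_cases a <;> revert ha_prime <;> decide
    · exact ⟨3, by simp, haS, by simp⟩
    · refine ⟨5, by simp, fun q hq ↦ ?_, by simp⟩
      have := haS q hq
      have := hodd q hq
      grind
  have hle := two_mul_mul_pow_le_sigma_one ha (fun h ↦ (haS a h).false) hS hodd hr hrS hdvd h4
  rw [hcard] at hle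
  exact hlt.trans_le hle

end NotFourDvdSigma

theorem stmt_1_general {n a : ℕ} (hdvd : n ∣ σ 1 n) (h4 : ¬ 4 ∣ σ 1 n) (ha : a ∈ n.primeFactors)
    (ha2 : 2 ≤ #{q ∈ n.primeFactors | a < q}) : a ^ 6 < σ 1 n := by
  have ha_prime := Nat.prime_of_mem_primeFactors ha
  obtain ⟨T, hT, hTcard⟩ := exists_subset_card_eq ha2
  have hTn : T ⊆ n.primeFactors := hT.trans (filter_subset _ _)
  have haT : ∀ q ∈ T, a < q := fun q hq ↦ (mem_filter.1 (hT hq)).2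
  have hTodd : ∀ q ∈ T, Odd q := fun q hq ↦
    (Nat.prime_of_mem_primeFactors (hTn hq)).odd_of_ne_two
      (ha_prime.two_le.trans_lt (haT q hq)).ne'
  obtain ha5 | ha5 := lt_or_ge a 5
  · exact pow_six_lt_sigma_one_of_lt_five ha ha5 hTn hTcard haT hTodd hdvd h4
  have hcard : #(insert a T) = 3 := by
    rw [card_insert_of_notMem fun h ↦ (haT a h).false, hTcard]
  have hsize : a ^ 3 ≤ 2 * (a - 1) ^ 3 := by
    obtain ⟨b, rfl⟩ := Nat.exists_eq_add_of_le' ha5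
    rw [show b + 5 - 1 = b + 4 by lia]
    nlinarith [sq_nonneg b]
  have hlt := pow_two_mul_card_lt_sigma_one (insert_subset ha hTn) (insert_nonempty a T)
    (forall_mem_insert _ _ _ |>.2 ⟨ha_prime.odd_of_ne_two (by lia), hTodd⟩) ha_prime.one_lt
    (forall_mem_insert _ _ _ |>.2 ⟨le_rfl, fun q hq ↦ (haT q hq).le⟩) (by rwa [hcard]) hdvd h4
  rwa [hcard] at hlt

/-- Let N be an odd perfect number with at least three distinct
prime divisors, and let a be its third largest prime divisor (i.e., exactly two
prime divisors of N exceed a). Then a < 2·N^(1/6), i.e., a^6 < 64·N. -/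
theorem stmt_1 (N : ℕ) (hodd : Odd N) (hperf : Nat.Perfect N)
    (hk : 3 ≤ N.primeFactors.card)
    (a : ℕ) (ha : a ∈ N.primeFactors)
    (ha2 : (N.primeFactors.filter (fun q => a < q)).card = 2) :
    a ^ 6 < 64 * N := by
  have hσ : σ 1 N = 2 * N := by
    rw [ArithmeticFunction.sigma_one_apply]
    exact (Nat.perfect_iff_sum_divisors_eq_two_mul hperf.2).1 hperf
  have h4 : ¬ 4 ∣ σ 1 N := by
    rw [hσ]
    grind
  have hlt : a ^ 6 < σ 1 N := stmt_1_general (hσ ▸ Dvd.intro_left 2 rfl) h4 ha ha2.ge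
  lia
end

section
/- Let N be an odd perfect number with at least three distinct prime divisors, let c be its largest prime divisor, b its second largest prime divisor, and a its third largest prime divisor. Then abc < 2^(5/12) · 3^(7/36) · N^(11/18). -/
/-!
Since `σ(N) = 2N` is twice an odd number, at most one prime divisor of `N` has odd exponent. Let
`a < b < c` be prime divisors. If `b` and `c` have exponents at least `2`, then `a b² c²` divides
`N`, which suffices. Otherwise one of them, `e`, has exponent `1`; this is compensated by the
divisor `e + 1` of `2N`, and a prime `p` of exponent exactly `2` contributes the divisor
`p² + p + 1` of `N`. The hardest case is `e = c`: then `c ∣ σ(p ^ k)` for another prime `p` with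
exponent `k` in `N`.
* If `p ∉ {a, b}`, then `c < 2 p ^ k`, and `p ^ k` is coprime to `a b² c`.
* If `p ∈ {a, b}` and `k ≥ 4`, an argument of Acquaah and Konyagin gives `c³ ≤ p · 2N`.
* If `p ∈ {a, b}` and `k = 2`, the divisors above are coprime enough unless `b ∣ a² + a + 1`,
  `c ∣ b² + b + 1` and `a² ∣ c + 1`, and this cycle of divisibilities is excluded modulo `3`.

All cases yield `(abc)¹⁸ ≤ (2N)¹¹`, and `2²² < 2¹⁵ · 3⁷`.
-/

open Finset
open scoped ArithmeticFunction.sigma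

section SizeCriteria

variable {a b c M : ℕ}

lemma pow_le_of_mul_sq_mul_sq_le (ha : 0 < a) (hab : a ≤ b) (hbc : b ≤ c)
    (h : a * b ^ 2 * c ^ 2 ≤ M) : (a * b * c) ^ 18 ≤ M ^ 11 :=
  have hac := hab.trans hbc
  calc (a * b * c) ^ 18 = a ^ 7 * (a ^ 11 * b ^ 18 * c ^ 18) := by ring
    _ ≤ a ^ 8 * (a ^ 11 * b ^ 18 * c ^ 18) := by gcongr; omega
    _ = a ^ 4 * a ^ 4 * (a ^ 11 * b ^ 18 * c ^ 18) := by ring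
    _ ≤ b ^ 4 * c ^ 4 * (a ^ 11 * b ^ 18 * c ^ 18) := by gcongr
    _ = (a * b ^ 2 * c ^ 2) ^ 11 := by ring
    _ ≤ M ^ 11 := by gcongr

lemma pow_le_of_pow_four_mul_sq_mul_le (hab : a ≤ b) (hb : 0 < b)
    (h₁ : a ^ 4 * b ^ 2 * c ≤ M) (h₂ : b ^ 2 * c ^ 2 ≤ M) : (a * b * c) ^ 18 ≤ M ^ 11 :=
  calc (a * b * c) ^ 18 = a ^ 2 * (a ^ 16 * b ^ 18 * c ^ 18) := by ring
    _ ≤ b ^ 4 * (a ^ 16 * b ^ 18 * c ^ 18) := by gcongr; omega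
    _ = (a ^ 4 * b ^ 2 * c) ^ 4 * (b ^ 2 * c ^ 2) ^ 7 := by ring
    _ ≤ M ^ 4 * M ^ 7 := by gcongr
    _ = M ^ 11 := by ring

lemma pow_le_of_sq_mul_mul_sq_le (hab : a ≤ b) (hb : 0 < b)
    (h₁ : a ^ 2 * b * c ^ 2 ≤ M) (h₂ : b ^ 4 * c ≤ M) : (a * b * c) ^ 18 ≤ M ^ 11 :=
  calc (a * b * c) ^ 18 = a ^ 4 * (a ^ 14 * b ^ 18 * c ^ 18) := by ring
    _ ≤ b ^ 5 * (a ^ 14 * b ^ 18 * c ^ 18) := by gcongr; omega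
    _ = (a ^ 2 * b * c ^ 2) ^ 7 * (b ^ 4 * c) ^ 4 := by ring
    _ ≤ M ^ 7 * M ^ 4 := by gcongr
    _ = M ^ 11 := by ring

lemma pow_le_of_pow_three_le_middle (hab : a ≤ b) (hb : 0 < b)
    (h₁ : c ^ 3 ≤ b * M) (h₂ : a ^ 2 * b ^ 4 * c ≤ M) : (a * b * c) ^ 18 ≤ M ^ 11 := by
  rcases c.eq_zero_or_pos with rfl | hc
  · simp
  refine Nat.le_of_mul_le_mul_right (c := b ^ 4) ?_ (by positivity)
  calc (a * b * c) ^ 18 * b ^ 4 = a ^ 4 * (a ^ 14 * b ^ 22 * c ^ 18) := by ring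
    _ ≤ b ^ 6 * (a ^ 14 * b ^ 22 * c ^ 18) := by gcongr; omega
    _ ≤ b ^ 6 * (a ^ 14 * b ^ 22 * c ^ 18) * c := Nat.le_mul_of_pos_right _ hc
    _ = (c ^ 3) ^ 4 * (a ^ 2 * b ^ 4 * c) ^ 7 := by ring
    _ ≤ (b * M) ^ 4 * M ^ 7 := by gcongr
    _ = M ^ 11 * b ^ 4 := by ring

lemma pow_le_of_pow_three_le_smallest (ha : 0 < a) (hab : a ≤ b)
    (h₁ : c ^ 3 ≤ a * M) (h₂ : a ^ 4 * b ^ 2 * c ≤ M) (h₃ : b ^ 4 * c ≤ M) :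
    (a * b * c) ^ 18 ≤ M ^ 11 := by
  refine (Nat.pow_le_pow_iff_left two_ne_zero).1 ?_
  refine Nat.le_of_mul_le_mul_right (c := a ^ 7) ?_ (by positivity)
  calc ((a * b * c) ^ 18) ^ 2 * a ^ 7 = a ^ 3 * (a ^ 40 * b ^ 36 * c ^ 36) := by ring
    _ ≤ b ^ 4 * (a ^ 40 * b ^ 36 * c ^ 36) := by gcongr <;> omega
    _ = (c ^ 3) ^ 7 * (a ^ 4 * b ^ 2 * c) ^ 10 * (b ^ 4 * c) ^ 5 := by ring
    _ ≤ (a * M) ^ 7 * M ^ 10 * M ^ 5 := by gcongr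
    _ = (M ^ 11) ^ 2 * a ^ 7 := by ring

end SizeCriteria

section SqAddSelfAddOne

lemma coprime_sq_add_self_add_one (x : ℕ) : x.Coprime (x ^ 2 + x + 1) := by
  rw [show x ^ 2 + x + 1 = 1 + x * (x + 1) by ring]
  simp

lemma odd_sq_add_self_add_one (x : ℕ) : Odd (x ^ 2 + x + 1) := by
  rw [sq, ← Nat.mul_succ]
  exact (Nat.even_mul_succ_self x).add_one

lemma mod_three_eq_one_of_prime_dvd_sq_add_self_add_one {p x : ℕ} (hp : p.Prime) (hp3 : p ≠ 3)
    (h : p ∣ x ^ 2 + x + 1) : p % 3 = 1 := by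
  have : Fact p.Prime := ⟨hp⟩
  have hroot : (x : ZMod p) ^ 2 + x + 1 = 0 := by
    exact_mod_cast (ZMod.natCast_eq_zero_iff _ _).2 h
  have hone : (x : ZMod p) ≠ 1 := by
    intro hx
    have h3 : ((3 : ℕ) : ZMod p) = 0 := by
      rw [hx] at hroot
      linear_combination hroot
    exact hp3 ((Nat.prime_dvd_prime_iff_eq hp Nat.prime_three).1
      ((ZMod.natCast_eq_zero_iff _ _).1 h3))
  have horder : orderOf (x : ZMod p) = 3 :=
    orderOf_eq_prime (by linear_combination ((x : ZMod p) - 1) * hroot) hone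
  have hzero : (x : ZMod p) ≠ 0 := fun hx => by simp [hx] at hroot
  have := horder ▸ ZMod.orderOf_dvd_card_sub_one hzero
  have := hp.pos
  omega

lemma not_dvd_add_one_of_dvd_sq_add_self_add_one {p c : ℕ} (hp : Odd p) (hp1 : 1 < p)
    (hpc : p < c) (h : c ∣ p ^ 2 + p + 1) : ¬ p ∣ c + 1 := by
  intro hpd
  obtain ⟨m, hm⟩ := h
  have hm_odd : Odd m := (Nat.odd_mul.1 (hm ▸ odd_sq_add_self_add_one p)).2
  have hpm : p ∣ m + 1 := by
    have hsum : p ∣ p * (p + 1) + (m + 1) := by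
      rw [show p * (p + 1) + (m + 1) = (c + 1) * m by linarith]
      exact hpd.mul_right m
    exact (Nat.dvd_add_right (dvd_mul_right p _)).1 hsum
  have hle : 2 * p ≤ m + 1 := Nat.le_of_dvd m.succ_pos
    ((Nat.coprime_two_left.2 hp).mul_dvd_of_dvd_of_dvd hm_odd.add_one.two_dvd hpm)
  nlinarith

lemma sq_add_self_add_one_lt_of_sq_dvd_add_one {a p : ℕ} (ha : Odd a) (ha1 : 1 < a) (hp : Odd p)
    (h : a ^ 2 ∣ p + 1) : a ^ 2 + a + 1 < p := by
  have hle : 2 * a ^ 2 ≤ p + 1 := Nat.le_of_dvd p.succ_pos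
    ((Nat.coprime_two_left.2 ha.pow).mul_dvd_of_dvd_of_dvd hp.add_one.two_dvd h)
  have ha3 : 3 ≤ a := by obtain ⟨t, rfl⟩ := ha; omega
  nlinarith

-- Eliminating `b` and `c` from the three factorizations shows that `a ^ 2` divides the left side of
-- the last equation; the quotient `y` is then less than `3`, but divisible by `3`.
lemma exists_cycle_quotient {a b c m n u : ℕ} (hbn : a ^ 2 + a + 1 = b * n)
    (hcm : b ^ 2 + b + 1 = c * m) (hcu : c + 1 = 2 * a ^ 2 * u) :
    ∃ y, 0 < y ∧ 2 * u * (m * n ^ 2) = a ^ 2 + 2 * a + 3 + n + y ∧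
      m * n ^ 2 + n ^ 2 + n * (a + 1) + 2 * a + 1 = a ^ 2 * y := by
  zify at hbn hcm hcu
  have hay : (m * n ^ 2 + n ^ 2 + n * (a + 1) + 2 * a + 1 : ℤ) =
      a ^ 2 * (2 * u * (m * n ^ 2) - (a ^ 2 + 2 * a + 3 + n)) := by
    linear_combination m * n ^ 2 * hcu + n ^ 2 * hcm + (b * n + a ^ 2 + a + 1 + n) * hbn
  have hpos : (0 : ℤ) < 2 * u * (m * n ^ 2) - (a ^ 2 + 2 * a + 3 + n) :=
    pos_of_mul_pos_right (hay ▸ by positivity) (sq_nonneg (a : ℤ))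
  obtain ⟨y, hy⟩ := Int.eq_ofNat_of_zero_le hpos.le
  rw [hy] at hay hpos
  exact ⟨y, by exact_mod_cast hpos, by zify; linarith, by exact_mod_cast hay⟩

lemma cycle_quotient_lt_three {a m n u y : ℕ} (ha : 4 ≤ a) (hu : 0 < u) (hm : 3 ≤ m) (hn : n < a)
    (hy : 2 * u * (m * n ^ 2) = a ^ 2 + 2 * a + 3 + n + y)
    (hay : m * n ^ 2 + n ^ 2 + n * (a + 1) + 2 * a + 1 = a ^ 2 * y) : y < 3 := by
  by_contra! hy3
  have hmn : 2 * (m * n ^ 2) ≤ a ^ 2 + 2 * a + 3 + n + y := by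
    rw [← hy]
    gcongr
    omega
  have hn2 : 3 * n ^ 2 ≤ m * n ^ 2 := by gcongr
  have hna : (n + 1) * (3 * a + 5) ≤ a * (3 * a + 5) := by gcongr; omega
  have hay3 : 3 * (a ^ 2 * y) ≤ 5 * a ^ 2 + 12 * a + 4 + 2 * y := by
    rw [← hay]
    linarith
  obtain ⟨z, rfl⟩ := Nat.exists_eq_add_of_le hy3
  have hz : z ≤ a ^ 2 * z := Nat.le_mul_of_pos_left z (by positivity)
  have ha4 : 4 * a ≤ a ^ 2 := by
    rw [sq]
    gcongr
  linarith

lemma three_dvd_cycle_quotient {a b c m n u y : ℕ} (hb3 : b % 3 = 1) (hc3 : c % 3 = 1)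
    (hbn : a ^ 2 + a + 1 = b * n) (hcm : b ^ 2 + b + 1 = c * m) (hcu : c + 1 = 2 * a ^ 2 * u)
    (hy : 2 * u * (m * n ^ 2) = a ^ 2 + 2 * a + 3 + n + y) : 3 ∣ m ∧ 3 ∣ y := by
  have hm : 3 ∣ m := by
    have : (b ^ 2 + b + 1) % 3 = 0 := by simp [Nat.add_mod, Nat.pow_mod, hb3]
    exact Nat.dvd_of_mod_eq_zero (by simpa [hcm, Nat.mul_mod, hc3] using this)
  have ha : a ^ 2 % 3 = 1 := by
    rcases (by omega : a % 3 = 0 ∨ a % 3 = 1 ∨ a % 3 = 2) with h | h | h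
    · have : 3 ∣ c + 1 := hcu ▸
        (((Nat.dvd_of_mod_eq_zero h).pow two_ne_zero).mul_left 2).mul_right u
      omega
    all_goals simp [Nat.pow_mod, h]
  have hn : (a ^ 2 + a + 1) % 3 = n % 3 := by simp [hbn, Nat.mul_mod, hb3]
  have : 3 ∣ 2 * u * (m * n ^ 2) := (hm.mul_right _).mul_left _
  exact ⟨hm, by omega⟩

lemma not_sq_dvd_add_one_of_dvd_of_dvd {a b c : ℕ} (ha : Odd a) (ha1 : 1 < a) (hab : a < b)
    (hbc : b < c) (hb : b.Prime) (hc : c.Prime) (hba : b ∣ a ^ 2 + a + 1)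
    (hcb : c ∣ b ^ 2 + b + 1) : ¬ a ^ 2 ∣ c + 1 := by
  intro hac
  have hb3 := mod_three_eq_one_of_prime_dvd_sq_add_self_add_one hb (by grind) hba
  have hc3 := mod_three_eq_one_of_prime_dvd_sq_add_self_add_one hc (by grind) hcb
  have hb_odd : Odd b := hb.odd_of_ne_two (by omega)
  have hc2 : 2 ∣ c + 1 := (hc.odd_of_ne_two (by omega)).add_one.two_dvd
  obtain ⟨u, hu⟩ := (Nat.coprime_two_left.2 ha.pow).mul_dvd_of_dvd_of_dvd hc2 hac
  obtain ⟨n, hn⟩ := hba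
  obtain ⟨m, hm⟩ := hcb
  obtain ⟨y, hy0, hy, hay⟩ := exists_cycle_quotient hn hm hu
  obtain ⟨hm3, hy3⟩ := three_dvd_cycle_quotient hb3 hc3 hn hm hu hy
  have hm0 : 0 < m := Nat.pos_of_ne_zero fun h => by simp [h] at hm
  have hu0 : 0 < u := Nat.pos_of_ne_zero fun h => by simp [h] at hu
  have hna : n < a := by
    have hb2 : a + 2 ≤ b := by grind
    by_contra! han
    nlinarith [Nat.mul_le_mul hb2 han]
  have ha3 : a ≠ 3 := by
    rintro rfl
    omega
  have ha4 : 4 ≤ a := by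
    obtain ⟨t, rfl⟩ := ha
    omega
  exact (Nat.le_of_dvd hy0 hy3).not_gt
    (cycle_quotient_lt_three ha4 hu0 (Nat.le_of_dvd hm0 hm3) hna hy hay)

end SqAddSelfAddOne

section SigmaPrimePow

variable {p k : ℕ}

lemma sigma_one_prime_sq (hp : p.Prime) : σ 1 (p ^ 2) = p ^ 2 + p + 1 := by
  rw [ArithmeticFunction.sigma_one_apply_prime_pow hp, geom_sum_succ', geom_sum_two]
  ring

lemma sigma_one_prime_pow_lt (hp : p.Prime) : σ 1 (p ^ k) < 2 * p ^ k := by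
  have hgeom : ∑ i ∈ range k, p ^ i < p ^ k :=
    Nat.geomSum_lt hp.two_le fun _ => mem_range.1
  rw [ArithmeticFunction.sigma_one_apply_prime_pow hp, geom_sum_succ']
  omega

lemma coprime_sigma_one_prime_pow (hp : p.Prime) : p.Coprime (σ 1 (p ^ k)) := by
  rw [ArithmeticFunction.sigma_one_apply_prime_pow hp, geom_sum_succ]
  simp

lemma two_dvd_sigma_one_prime_pow (hp : p.Prime) (hp_odd : Odd p) (hk : Odd k) :
    2 ∣ σ 1 (p ^ k) := by
  rw [ArithmeticFunction.sigma_one_apply_prime_pow hp, ← even_iff_two_dvd,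
    Finset.even_sum_iff_even_card_odd]
  simpa [hp_odd.pow] using hk.add_one

lemma pow_lt_of_mul_add_one_eq_pow {p c x j K : ℕ} (hp : 1 < p) (hx : 1 < x)
    (h : c * x + 1 = p ^ K) (hj : p ^ j ∣ c + 1) : p ^ j < x := by
  obtain ⟨y, rfl⟩ := Nat.exists_eq_add_of_lt hx
  have hcK : c + 1 ≤ p ^ K := by
    rw [← h]
    gcongr
    exact Nat.le_mul_of_pos_right c (by omega)
  have hjK : p ^ j ∣ p ^ K :=
    pow_dvd_pow p ((Nat.pow_le_pow_iff_right hp).1 ((Nat.le_of_dvd c.succ_pos hj).trans hcK))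
  have hsum : p ^ K + (1 + y) = (c + 1) * (1 + y + 1) := by
    rw [← h]
    ring
  have hdvd : p ^ j ∣ 1 + y := (Nat.dvd_add_right hjK).1 (hsum ▸ hj.mul_right _)
  exact Nat.lt_succ_of_le (Nat.le_of_dvd (by omega) hdvd)

lemma sigma_one_prime_pow_mul_pred_add_one (hp : p.Prime) :
    σ 1 (p ^ k) * (p - 1) + 1 = p ^ (k + 1) := by
  simpa [ArithmeticFunction.sigma_one_apply_prime_pow hp, Nat.sub_add_cancel hp.one_le] using
    geom_sum_mul_add (p - 1) (k + 1)

lemma pow_three_le_of_dvd_sigma_one_prime_pow {c M : ℕ} (hp : p.Prime) (hp2 : p ≠ 2) (hM : 0 < M)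
    (hc : c ∣ σ 1 (p ^ k)) (hcM : c * (c + 1) ∣ M) (hpM : p ^ k ∣ M) : c ^ 3 ≤ p * M := by
  have hcop : p.Coprime c := (coprime_sigma_one_prime_pow hp).coprime_dvd_right hc
  obtain ⟨m, hm⟩ := hc
  have hm0 : 0 < m := Nat.pos_of_ne_zero fun h => by
    simp [h, hp.ne_zero] at hm
  have hx : 1 < m * (p - 1) := by
    have hp3 : 1 < p - 1 := by have := hp.two_le; omega
    exact hp3.trans_le (Nat.le_mul_of_pos_left _ hm0)
  have hpow : c * (m * (p - 1)) + 1 = p ^ (k + 1) := by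
    rw [← mul_assoc, ← hm, sigma_one_prime_pow_mul_pred_add_one hp]
  obtain ⟨j, v, hpv, hv⟩ := Nat.exists_eq_pow_mul_and_not_dvd (Nat.add_one_ne_zero c) p hp.ne_one
  have hj : p ^ j < m * (p - 1) :=
    pow_lt_of_mul_add_one_eq_pow hp.one_lt hx hpow ⟨v, hv⟩
  have hdvd : p ^ k * (v * c) ∣ M := by
    refine (((hp.coprime_iff_not_dvd.2 hpv).mul_right hcop).pow_left k).mul_dvd_of_dvd_of_dvd
      hpM (dvd_trans ?_ hcM)
    rw [hv, mul_comm c]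
    exact mul_dvd_mul_right (dvd_mul_left v _) c
  calc c ^ 3 = c * c * c := by ring
    _ ≤ c * (c + 1) * c := by gcongr; omega
    _ = c * p ^ j * (v * c) := by rw [hv]; ring
    _ ≤ c * (m * (p - 1)) * (v * c) := by gcongr
    _ ≤ p ^ (k + 1) * (v * c) := by gcongr; omega
    _ = p * (p ^ k * (v * c)) := by ring
    _ ≤ p * M := by gcongr; exact Nat.le_of_dvd hM hdvd

end SigmaPrimePow

section Divisibility

variable {M N : ℕ}

lemma mul_dvd_of_not_sq_dvd {p d : ℕ} (hp : p.Prime) (hpM : p ^ 2 ∣ M) (hdM : d ∣ M)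
    (hpd : ¬p ^ 2 ∣ d) : p * d ∣ M := by
  by_cases h : p ∣ d
  · obtain ⟨d, rfl⟩ := h
    have hcop : p.Coprime d := hp.coprime_iff_not_dvd.2 fun h =>
      hpd (sq p ▸ mul_dvd_mul_left p h)
    rw [← mul_assoc, ← sq]
    exact (hcop.pow_left 2).mul_dvd_of_dvd_of_dvd hpM (dvd_of_mul_left_dvd hdM)
  · exact (hp.coprime_iff_not_dvd.2 h).mul_dvd_of_dvd_of_dvd
      ((dvd_pow_self p two_ne_zero).trans hpM) hdM

lemma pow_dvd_of_le_factorization {p k : ℕ} (h : k ≤ N.factorization p) : p ^ k ∣ N :=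
  (pow_dvd_pow p h).trans (Nat.ordProj_dvd N p)

lemma factorization_pos_of_mem_primeFactors {p : ℕ} (hp : p ∈ N.primeFactors) :
    0 < N.factorization p :=
  (Nat.prime_of_mem_primeFactors hp).factorization_pos_of_dvd
    (Nat.mem_primeFactors.1 hp).2.2 (Nat.dvd_of_mem_primeFactors hp)

lemma factorization_eq_two_or_four_le {p : ℕ} (hp : p ∈ N.primeFactors)
    (heven : Even (N.factorization p)) : N.factorization p = 2 ∨ 4 ≤ N.factorization p := by
  have := factorization_pos_of_mem_primeFactors hp
  grind

lemma pow_mul_pow_mul_pow_dvd {a b c i j k : ℕ} (ha : a.Prime) (hb : b.Prime) (hc : c.Prime)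
    (hab : a ≠ b) (hac : a ≠ c) (hbc : b ≠ c) (hi : i ≤ N.factorization a)
    (hj : j ≤ N.factorization b) (hk : k ≤ N.factorization c) : a ^ i * b ^ j * c ^ k ∣ N :=
  ((Nat.coprime_pow_primes i k ha hc hac).mul_left
    (Nat.coprime_pow_primes j k hb hc hbc)).mul_dvd_of_dvd_of_dvd
    ((Nat.coprime_pow_primes i j ha hb hab).mul_dvd_of_dvd_of_dvd
      (pow_dvd_of_le_factorization hi) (pow_dvd_of_le_factorization hj))
    (pow_dvd_of_le_factorization hk)

end Divisibility

section Perfect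

variable {N p q : ℕ}

lemma prod_primeFactors_sigma_one (hN : N ≠ 0) :
    ∏ p ∈ N.primeFactors, σ 1 (p ^ N.factorization p) = σ 1 N :=
  (ArithmeticFunction.isMultiplicative_sigma.multiplicative_factorization _ hN).symm

lemma prod_primeFactors_sigma_one_of_perfect (hperf : N.Perfect) :
    ∏ p ∈ N.primeFactors, σ 1 (p ^ N.factorization p) = 2 * N := by
  rw [prod_primeFactors_sigma_one hperf.2.ne', ArithmeticFunction.sigma_one_apply,
    (Nat.perfect_iff_sum_divisors_eq_two_mul hperf.2).1 hperf]

lemma sigma_one_dvd_two_mul_of_perfect (hperf : N.Perfect) (hp : p ∈ N.primeFactors) :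
    σ 1 (p ^ N.factorization p) ∣ 2 * N :=
  prod_primeFactors_sigma_one_of_perfect hperf ▸ dvd_prod_of_mem _ hp

lemma exists_ne_dvd_sigma_one_of_perfect (hperf : N.Perfect) (hp : p ∈ N.primeFactors) :
    ∃ q ∈ N.primeFactors, q ≠ p ∧ p ∣ σ 1 (q ^ N.factorization q) := by
  have hp_prime := Nat.prime_of_mem_primeFactors hp
  obtain ⟨q, hq, hpq⟩ := hp_prime.prime.exists_mem_finset_dvd
    (prod_primeFactors_sigma_one_of_perfect hperf ▸
      (Nat.dvd_of_mem_primeFactors hp).mul_left 2)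
  refine ⟨q, hq, ?_, hpq⟩
  rintro rfl
  exact hp_prime.coprime_iff_not_dvd.1 (coprime_sigma_one_prime_pow hp_prime) hpq

lemma even_factorization_of_odd_factorization (hodd : Odd N) (hperf : N.Perfect)
    (hp : p ∈ N.primeFactors) (hq : q ∈ N.primeFactors) (hpq : p ≠ q)
    (hq_odd : Odd (N.factorization q)) : Even (N.factorization p) := by
  by_contra hp_odd
  have htwo {r : ℕ} (hr : r ∈ N.primeFactors) (h : Odd (N.factorization r)) :
      2 ∣ σ 1 (r ^ N.factorization r) :=
    two_dvd_sigma_one_prime_pow (Nat.prime_of_mem_primeFactors hr)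
      (hodd.of_dvd_nat (Nat.dvd_of_mem_primeFactors hr)) h
  have hfour : 2 * 2 ∣ 2 * N := calc
    2 * 2 ∣ σ 1 (p ^ N.factorization p) * σ 1 (q ^ N.factorization q) :=
      mul_dvd_mul (htwo hp (Nat.not_even_iff_odd.1 hp_odd)) (htwo hq hq_odd)
    _ = ∏ r ∈ {p, q}, σ 1 (r ^ N.factorization r) := by rw [prod_pair hpq]
    _ ∣ ∏ r ∈ N.primeFactors, σ 1 (r ^ N.factorization r) :=
      prod_dvd_prod_of_subset _ _ _ (by simp [insert_subset_iff, hp, hq])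
    _ = 2 * N := prod_primeFactors_sigma_one_of_perfect hperf
  exact hodd.not_two_dvd_nat (Nat.dvd_of_mul_dvd_mul_left two_pos hfour)

lemma add_one_dvd_two_mul_of_factorization_eq_one (hperf : N.Perfect) (hp : p ∈ N.primeFactors)
    (hp1 : N.factorization p = 1) : p + 1 ∣ 2 * N := by
  have := sigma_one_dvd_two_mul_of_perfect hperf hp
  rwa [hp1, ArithmeticFunction.sigma_one_apply_prime_pow (Nat.prime_of_mem_primeFactors hp),
    geom_sum_two] at this

lemma sq_add_self_add_one_dvd_of_factorization_eq_two (hperf : N.Perfect)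
    (hp : p ∈ N.primeFactors) (hp2 : N.factorization p = 2) : p ^ 2 + p + 1 ∣ N := by
  have := sigma_one_dvd_two_mul_of_perfect hperf hp
  rw [hp2, sigma_one_prime_sq (Nat.prime_of_mem_primeFactors hp)] at this
  exact (Nat.coprime_two_right.2 (odd_sq_add_self_add_one p)).dvd_of_dvd_mul_left this

-- For exponent `2`, the divisor `p ^ 2 + p + 1` of `N` makes up for the missing factor `p ^ 2`.
lemma pow_four_mul_le_of_perfect {s : ℕ} (hperf : N.Perfect) (hp : p ∈ N.primeFactors)
    (hp_even : Even (N.factorization p)) (hs : s ∣ N) (hps : p.Coprime s)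
    (hs2 : N.factorization p = 2 → (p ^ 2 + p + 1).Coprime s) : p ^ 4 * s ≤ N := by
  rcases factorization_eq_two_or_four_le hp hp_even with h2 | h4
  · have hdvd : p ^ 2 * (p ^ 2 + p + 1) * s ∣ N :=
      ((hps.pow_left 2).mul_left (hs2 h2)).mul_dvd_of_dvd_of_dvd
        (((coprime_sq_add_self_add_one p).pow_left 2).mul_dvd_of_dvd_of_dvd
          (pow_dvd_of_le_factorization h2.ge)
          (sq_add_self_add_one_dvd_of_factorization_eq_two hperf hp h2)) hs
    calc p ^ 4 * s = p ^ 2 * p ^ 2 * s := by ring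
      _ ≤ p ^ 2 * (p ^ 2 + p + 1) * s := by gcongr; omega
      _ ≤ N := Nat.le_of_dvd hperf.2 hdvd
  · exact Nat.le_of_dvd hperf.2 <|
      (hps.pow_left 4).mul_dvd_of_dvd_of_dvd (pow_dvd_of_le_factorization h4) hs

lemma pow_three_le_of_dvd_sigma_one_of_perfect {c : ℕ} (hodd : Odd N) (hperf : N.Perfect)
    (hp : p ∈ N.primeFactors) (hc : c ∈ N.primeFactors) (hc1 : N.factorization c = 1)
    (hcp : c ∣ σ 1 (p ^ N.factorization p)) : c ^ 3 ≤ p * (2 * N) :=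
  have hccN : c * (c + 1) ∣ 2 * N :=
    (by simp : c.Coprime (c + 1)).mul_dvd_of_dvd_of_dvd
      ((Nat.dvd_of_mem_primeFactors hc).mul_left 2)
      (add_one_dvd_two_mul_of_factorization_eq_one hperf hc hc1)
  pow_three_le_of_dvd_sigma_one_prime_pow (Nat.prime_of_mem_primeFactors hp)
    (hodd.ne_two_of_dvd_nat (Nat.dvd_of_mem_primeFactors hp)) (Nat.mul_pos two_pos hperf.2) hcp
    hccN ((Nat.ordProj_dvd N p).mul_left 2)

end Perfect

section LargestPrimes

variable {N a b c : ℕ}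

lemma mul_sq_mul_sq_le_or_pow_four_mul_le {e f : ℕ} (hperf : N.Perfect)
    (ha : a ∈ N.primeFactors) (he : e ∈ N.primeFactors) (hf : f ∈ N.primeFactors)
    (hae : a ≠ e) (haf : a ≠ f) (hef : e ≠ f) (ha_even : Even (N.factorization a))
    (he1 : N.factorization e = 1) (hf2 : N.factorization f = 2) (hfe : ¬f ∣ e + 1)
    (hsq : a ^ 2 ∣ e + 1 → ¬e ∣ a ^ 2 + a + 1 ∧ ¬f ∣ a ^ 2 + a + 1) :
    a * e ^ 2 * f ^ 2 ≤ 2 * N ∨ a ^ 4 * (e * f ^ 2) ≤ N ∧ e ^ 2 * f ^ 2 ≤ 2 * N := by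
  have ha_prime := Nat.prime_of_mem_primeFactors ha
  have he_prime := Nat.prime_of_mem_primeFactors he
  have hf_prime := Nat.prime_of_mem_primeFactors hf
  have haN : a ^ 2 ∣ N := pow_dvd_of_le_factorization (by
    have := factorization_pos_of_mem_primeFactors ha
    grind)
  have heN : e + 1 ∣ 2 * N := add_one_dvd_two_mul_of_factorization_eq_one hperf he he1
  have hefN : e * f ^ 2 ∣ N :=
    (((Nat.coprime_primes he_prime hf_prime).2 hef).pow_right 2).mul_dvd_of_dvd_of_dvd
      (Nat.dvd_of_mem_primeFactors he) (pow_dvd_of_le_factorization hf2.ge)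
  have ha_cop : a.Coprime (e * f ^ 2) := ((Nat.coprime_primes ha_prime he_prime).2 hae).mul_right
    (((Nat.coprime_primes ha_prime hf_prime).2 haf).pow_right 2)
  have he_cop : (e + 1).Coprime (e * f ^ 2) := (by simp : (e + 1).Coprime e).mul_right
    ((hf_prime.coprime_iff_not_dvd.2 hfe).symm.pow_right 2)
  have hN2 : 0 < 2 * N := Nat.mul_pos two_pos hperf.2
  by_cases hae2 : a ^ 2 ∣ e + 1
  · have ha_cop' : (a ^ 2 + a + 1).Coprime (e * f ^ 2) :=
      (he_prime.coprime_iff_not_dvd.2 (hsq hae2).1).symm.mul_right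
        ((hf_prime.coprime_iff_not_dvd.2 (hsq hae2).2).symm.pow_right 2)
    refine .inr ⟨pow_four_mul_le_of_perfect hperf ha ha_even hefN ha_cop fun _ => ha_cop', ?_⟩
    calc e ^ 2 * f ^ 2 = e * (e * f ^ 2) := by ring
      _ ≤ (e + 1) * (e * f ^ 2) := by gcongr; omega
      _ ≤ 2 * N := Nat.le_of_dvd hN2 (he_cop.mul_dvd_of_dvd_of_dvd heN (hefN.mul_left 2))
  · left
    calc a * e ^ 2 * f ^ 2 = a * e * (e * f ^ 2) := by ring
      _ ≤ a * (e + 1) * (e * f ^ 2) := by gcongr; omega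
      _ ≤ 2 * N := Nat.le_of_dvd hN2 <| (ha_cop.mul_left he_cop).mul_dvd_of_dvd_of_dvd
        (mul_dvd_of_not_sq_dvd ha_prime (haN.mul_left 2) heN hae2) (hefN.mul_left 2)

lemma pow_le_of_two_le_factorization (hperf : N.Perfect) (ha : a ∈ N.primeFactors)
    (hb : b ∈ N.primeFactors) (hc : c ∈ N.primeFactors) (hab : a < b) (hbc : b < c)
    (hb2 : 2 ≤ N.factorization b) (hc2 : 2 ≤ N.factorization c) :
    (a * b * c) ^ 18 ≤ (2 * N) ^ 11 := by
  have hdvd : a ^ 1 * b ^ 2 * c ^ 2 ∣ N :=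
    pow_mul_pow_mul_pow_dvd (Nat.prime_of_mem_primeFactors ha) (Nat.prime_of_mem_primeFactors hb)
      (Nat.prime_of_mem_primeFactors hc) hab.ne (hab.trans hbc).ne hbc.ne
      (factorization_pos_of_mem_primeFactors ha) hb2 hc2
  have hle := Nat.le_of_dvd hperf.2 hdvd
  rw [pow_one] at hle
  exact pow_le_of_mul_sq_mul_sq_le (Nat.pos_of_mem_primeFactors ha) hab.le hbc.le (by omega)

lemma pow_le_of_four_le_factorization (hperf : N.Perfect) (ha : a ∈ N.primeFactors)
    (hb : b ∈ N.primeFactors) (hc : c ∈ N.primeFactors) (hab : a < b) (hbc : b < c)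
    (hc4 : 4 ≤ N.factorization c) : (a * b * c) ^ 18 ≤ (2 * N) ^ 11 := by
  have ha_prime := Nat.prime_of_mem_primeFactors ha
  have hdvd : a ^ 1 * b ^ 1 * c ^ 4 ∣ N :=
    pow_mul_pow_mul_pow_dvd ha_prime (Nat.prime_of_mem_primeFactors hb)
      (Nat.prime_of_mem_primeFactors hc) hab.ne (hab.trans hbc).ne hbc.ne
      (factorization_pos_of_mem_primeFactors ha) (factorization_pos_of_mem_primeFactors hb) hc4
  refine pow_le_of_mul_sq_mul_sq_le ha_prime.pos hab.le hbc.le ?_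
  calc a * b ^ 2 * c ^ 2 = a * b * (b * c ^ 2) := by ring
    _ ≤ a * b * (c ^ 2 * c ^ 2) := by gcongr; nlinarith
    _ = a ^ 1 * b ^ 1 * c ^ 4 := by ring
    _ ≤ N := Nat.le_of_dvd hperf.2 hdvd
    _ ≤ 2 * N := by omega

lemma pow_le_of_factorization_middle_eq_one (hodd : Odd N) (hperf : N.Perfect)
    (ha : a ∈ N.primeFactors) (hb : b ∈ N.primeFactors) (hc : c ∈ N.primeFactors)
    (hab : a < b) (hbc : b < c) (hb1 : N.factorization b = 1) :
    (a * b * c) ^ 18 ≤ (2 * N) ^ 11 := by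
  have heven {p : ℕ} (hp : p ∈ N.primeFactors) (hpb : p ≠ b) : Even (N.factorization p) :=
    even_factorization_of_odd_factorization hodd hperf hp hb hpb (hb1 ▸ odd_one)
  rcases factorization_eq_two_or_four_le hc (heven hc hbc.ne') with hc2 | hc4
  swap
  · exact pow_le_of_four_le_factorization hperf ha hb hc hab hbc hc4
  have ha_prime := Nat.prime_of_mem_primeFactors ha
  have ha_odd := hodd.of_dvd_nat (Nat.dvd_of_mem_primeFactors ha)
  have hb_odd := hodd.of_dvd_nat (Nat.dvd_of_mem_primeFactors hb)
  have hc_odd := hodd.of_dvd_nat (Nat.dvd_of_mem_primeFactors hc)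
  have hcb : ¬c ∣ b + 1 := Nat.not_dvd_of_pos_of_lt b.succ_pos (by grind)
  have hsq (h : a ^ 2 ∣ b + 1) : ¬b ∣ a ^ 2 + a + 1 ∧ ¬c ∣ a ^ 2 + a + 1 := by
    have hlt := sq_add_self_add_one_lt_of_sq_dvd_add_one ha_odd ha_prime.one_lt hb_odd h
    exact ⟨Nat.not_dvd_of_pos_of_lt (by omega) hlt,
      Nat.not_dvd_of_pos_of_lt (by omega) (hlt.trans hbc)⟩
  rcases mul_sq_mul_sq_le_or_pow_four_mul_le hperf ha hb hc hab.ne (hab.trans hbc).ne hbc.ne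
    (heven ha hab.ne) hb1 hc2 hcb hsq with h | ⟨h₁, h₂⟩
  · exact pow_le_of_mul_sq_mul_sq_le ha_prime.pos hab.le hbc.le h
  · refine pow_le_of_pow_four_mul_sq_mul_le hab.le (Nat.pos_of_mem_primeFactors hb) ?_ h₂
    calc a ^ 4 * b ^ 2 * c = a ^ 4 * (b * (b * c)) := by ring
      _ ≤ a ^ 4 * (b * (c * c)) := by gcongr
      _ = a ^ 4 * (b * c ^ 2) := by ring
      _ ≤ 2 * N := by omega

lemma pow_le_of_dvd_sq_add_self_add_one_middle (hodd : Odd N) (hperf : N.Perfect)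
    (ha : a ∈ N.primeFactors) (hb : b ∈ N.primeFactors) (hc : c ∈ N.primeFactors)
    (hab : a < b) (hbc : b < c) (hc1 : N.factorization c = 1) (hb2 : N.factorization b = 2)
    (hcb : c ∣ b ^ 2 + b + 1) : (a * b * c) ^ 18 ≤ (2 * N) ^ 11 := by
  have ha_prime := Nat.prime_of_mem_primeFactors ha
  have hb_prime := Nat.prime_of_mem_primeFactors hb
  have hc_prime := Nat.prime_of_mem_primeFactors hc
  have ha_odd := hodd.of_dvd_nat (Nat.dvd_of_mem_primeFactors ha)
  have hb_odd := hodd.of_dvd_nat (Nat.dvd_of_mem_primeFactors hb)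
  have hc_odd := hodd.of_dvd_nat (Nat.dvd_of_mem_primeFactors hc)
  have ha_even := even_factorization_of_odd_factorization hodd hperf ha hc (hab.trans hbc).ne
    (hc1 ▸ odd_one)
  have hbc1 : ¬b ∣ c + 1 :=
    not_dvd_add_one_of_dvd_sq_add_self_add_one hb_odd hb_prime.one_lt hbc hcb
  have hsq (h : a ^ 2 ∣ c + 1) : ¬c ∣ a ^ 2 + a + 1 ∧ ¬b ∣ a ^ 2 + a + 1 :=
    ⟨Nat.not_dvd_of_pos_of_lt (by omega)
      (sq_add_self_add_one_lt_of_sq_dvd_add_one ha_odd ha_prime.one_lt hc_odd h),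
    fun hba => not_sq_dvd_add_one_of_dvd_of_dvd ha_odd ha_prime.one_lt hab hbc hb_prime hc_prime
      hba hcb h⟩
  rcases mul_sq_mul_sq_le_or_pow_four_mul_le hperf ha hc hb (hab.trans hbc).ne hab.ne hbc.ne'
    ha_even hc1 hb2 hbc1 hsq with h | ⟨h₁, h₂⟩
  · exact pow_le_of_mul_sq_mul_sq_le ha_prime.pos hab.le hbc.le (by linarith)
  · exact pow_le_of_pow_four_mul_sq_mul_le hab.le hb_prime.pos (by linarith) (by linarith)

lemma pow_le_of_dvd_sq_add_self_add_one_smallest (hodd : Odd N) (hperf : N.Perfect)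
    (ha : a ∈ N.primeFactors) (hb : b ∈ N.primeFactors) (hc : c ∈ N.primeFactors)
    (hab : a < b) (hbc : b < c) (ha2 : N.factorization a = 2) (hb2 : 2 ≤ N.factorization b)
    (hc1 : N.factorization c = 1) (hca : c ∣ a ^ 2 + a + 1) (hbcN : b ^ 4 * c ≤ N) :
    (a * b * c) ^ 18 ≤ (2 * N) ^ 11 := by
  have ha_prime := Nat.prime_of_mem_primeFactors ha
  have hb_prime := Nat.prime_of_mem_primeFactors hb
  have hc_prime := Nat.prime_of_mem_primeFactors hc
  have ha_odd := hodd.of_dvd_nat (Nat.dvd_of_mem_primeFactors ha)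
  have hb_odd := hodd.of_dvd_nat (Nat.dvd_of_mem_primeFactors hb)
  have hc_odd := hodd.of_dvd_nat (Nat.dvd_of_mem_primeFactors hc)
  have hac1 : ¬a ∣ c + 1 :=
    not_dvd_add_one_of_dvd_sq_add_self_add_one ha_odd ha_prime.one_lt (hab.trans hbc) hca
  have hbc1 : ¬b ^ 2 ∣ c + 1 := fun h => by
    have hbc' := sq_add_self_add_one_lt_of_sq_dvd_add_one hb_odd hb_prime.one_lt hc_odd h
    have hca' := Nat.le_of_dvd (by omega) hca
    nlinarith
  have hacN : a ^ 2 * c ∣ N :=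
    (((Nat.coprime_primes ha_prime hc_prime).2 (hab.trans hbc).ne).pow_left 2).mul_dvd_of_dvd_of_dvd
      (pow_dvd_of_le_factorization ha2.ge) (Nat.dvd_of_mem_primeFactors hc)
  have hb_cop : b.Coprime (a ^ 2 * c) :=
    (((Nat.coprime_primes hb_prime ha_prime).2 hab.ne').pow_right 2).mul_right
      ((Nat.coprime_primes hb_prime hc_prime).2 hbc.ne)
  have hc_cop : (c + 1).Coprime (a ^ 2 * c) :=
    ((ha_prime.coprime_iff_not_dvd.2 hac1).symm.pow_right 2).mul_right (by simp)
  have hdvd : b * (c + 1) * (a ^ 2 * c) ∣ 2 * N :=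
    (hb_cop.mul_left hc_cop).mul_dvd_of_dvd_of_dvd
      (mul_dvd_of_not_sq_dvd hb_prime ((pow_dvd_of_le_factorization hb2).mul_left 2)
        (add_one_dvd_two_mul_of_factorization_eq_one hperf hc hc1) hbc1) (hacN.mul_left 2)
  refine pow_le_of_sq_mul_mul_sq_le hab.le hb_prime.pos ?_ (by omega)
  calc a ^ 2 * b * c ^ 2 = b * c * (a ^ 2 * c) := by ring
    _ ≤ b * (c + 1) * (a ^ 2 * c) := by gcongr; omega
    _ ≤ 2 * N := Nat.le_of_dvd (Nat.mul_pos two_pos hperf.2) hdvd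

lemma mul_sq_mul_sq_le_of_dvd_sigma_one {p : ℕ} (hperf : N.Perfect) (ha : a ∈ N.primeFactors)
    (hb : b ∈ N.primeFactors) (hc : c ∈ N.primeFactors) (hp : p ∈ N.primeFactors) (hab : a ≠ b)
    (hac : a ≠ c) (hbc : b ≠ c) (hpa : p ≠ a) (hpb : p ≠ b) (hpc : p ≠ c)
    (hb2 : 2 ≤ N.factorization b) (hcp : c ∣ σ 1 (p ^ N.factorization p)) :
    a * b ^ 2 * c ^ 2 ≤ 2 * N := by
  have ha_prime := Nat.prime_of_mem_primeFactors ha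
  have hb_prime := Nat.prime_of_mem_primeFactors hb
  have hc_prime := Nat.prime_of_mem_primeFactors hc
  have hp_prime := Nat.prime_of_mem_primeFactors hp
  have hc_le : c ≤ 2 * p ^ N.factorization p :=
    (Nat.le_of_dvd (ArithmeticFunction.sigma_pos 1 _ (pow_ne_zero _ hp_prime.ne_zero)) hcp).trans
      (sigma_one_prime_pow_lt hp_prime).le
  have habcN : a ^ 1 * b ^ 2 * c ^ 1 ∣ N :=
    pow_mul_pow_mul_pow_dvd ha_prime hb_prime hc_prime hab hac hbc
      (factorization_pos_of_mem_primeFactors ha) hb2 (factorization_pos_of_mem_primeFactors hc)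
  have hcop {q : ℕ} (hq : q.Prime) (hpq : p ≠ q) : p.Coprime q :=
    (Nat.coprime_primes hp_prime hq).2 hpq
  have hdvd : p ^ N.factorization p * (a ^ 1 * b ^ 2 * c ^ 1) ∣ N :=
    (((((hcop ha_prime hpa).pow_right 1).mul_right ((hcop hb_prime hpb).pow_right 2)).mul_right
      ((hcop hc_prime hpc).pow_right 1)).pow_left _).mul_dvd_of_dvd_of_dvd
      (Nat.ordProj_dvd N p) habcN
  calc a * b ^ 2 * c ^ 2 = c * (a ^ 1 * b ^ 2 * c ^ 1) := by ring
    _ ≤ 2 * p ^ N.factorization p * (a ^ 1 * b ^ 2 * c ^ 1) := by gcongr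
    _ = 2 * (p ^ N.factorization p * (a ^ 1 * b ^ 2 * c ^ 1)) := by ring
    _ ≤ 2 * N := by gcongr; exact Nat.le_of_dvd hperf.2 hdvd

lemma pow_le_of_dvd_sigma_one (hodd : Odd N) (hperf : N.Perfect)
    (ha : a ∈ N.primeFactors) (hb : b ∈ N.primeFactors) (hc : c ∈ N.primeFactors)
    (hab : a < b) (hbc : b < c) (hc1 : N.factorization c = 1)
    (hcb : N.factorization b = 2 → ¬c ∣ b ^ 2 + b + 1) : (a * b * c) ^ 18 ≤ (2 * N) ^ 11 := by
  have hac := hab.trans hbc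
  have ha_prime := Nat.prime_of_mem_primeFactors ha
  have hb_prime := Nat.prime_of_mem_primeFactors hb
  have hc_prime := Nat.prime_of_mem_primeFactors hc
  have heven {p : ℕ} (hp : p ∈ N.primeFactors) (hpc : p ≠ c) : Even (N.factorization p) :=
    even_factorization_of_odd_factorization hodd hperf hp hc hpc (hc1 ▸ odd_one)
  have ha_two := factorization_eq_two_or_four_le ha (heven ha hac.ne)
  have hb_two := factorization_eq_two_or_four_le hb (heven hb hbc.ne)
  have hbcN : b ^ 4 * c ≤ N := pow_four_mul_le_of_perfect hperf hb (heven hb hbc.ne)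
    (Nat.dvd_of_mem_primeFactors hc)
    ((Nat.coprime_primes hb_prime hc_prime).2 hbc.ne)
    fun hb2 => (hc_prime.coprime_iff_not_dvd.2 (hcb hb2)).symm
  have habcN {i j : ℕ} (hi : i ≤ N.factorization a) (hj : j ≤ N.factorization b) :
      a ^ i * b ^ j * c ^ 1 ≤ 2 * N :=
    Nat.le_of_dvd (Nat.mul_pos two_pos hperf.2) <|
      (pow_mul_pow_mul_pow_dvd ha_prime hb_prime hc_prime hab.ne hac.ne hbc.ne hi hj
        hc1.ge).mul_left 2
  obtain ⟨p, hp, hpc, hcp⟩ := exists_ne_dvd_sigma_one_of_perfect hperf hc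
  have hcube := pow_three_le_of_dvd_sigma_one_of_perfect hodd hperf hp hc hc1 hcp
  obtain rfl | hpb := eq_or_ne p b
  · have hb4 : 4 ≤ N.factorization p := hb_two.resolve_left fun hb2 =>
      hcb hb2 (sigma_one_prime_sq hb_prime ▸ hb2 ▸ hcp)
    exact pow_le_of_pow_three_le_middle hab.le hb_prime.pos hcube
      (by simpa using habcN (by omega) hb4)
  obtain rfl | hpa := eq_or_ne p a
  · rcases ha_two with ha2 | ha4
    · exact pow_le_of_dvd_sq_add_self_add_one_smallest hodd hperf ha hb hc hab hbc ha2 (by omega)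
        hc1 (sigma_one_prime_sq ha_prime ▸ ha2 ▸ hcp) hbcN
    · exact pow_le_of_pow_three_le_smallest ha_prime.pos hab.le hcube
        (by simpa using habcN ha4 (by omega)) (by omega)
  · exact pow_le_of_mul_sq_mul_sq_le ha_prime.pos hab.le hbc.le
      (mul_sq_mul_sq_le_of_dvd_sigma_one hperf ha hb hc hp hab.ne hac.ne hbc.ne hpa hpb hpc
        (by omega) hcp)

lemma pow_le_of_perfect (hodd : Odd N) (hperf : N.Perfect) (ha : a ∈ N.primeFactors)
    (hb : b ∈ N.primeFactors) (hc : c ∈ N.primeFactors) (hab : a < b) (hbc : b < c) :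
    (a * b * c) ^ 18 ≤ (2 * N) ^ 11 := by
  by_cases hb1 : N.factorization b = 1
  · exact pow_le_of_factorization_middle_eq_one hodd hperf ha hb hc hab hbc hb1
  by_cases hc1 : N.factorization c = 1
  · by_cases hcb : N.factorization b = 2 ∧ c ∣ b ^ 2 + b + 1
    · exact pow_le_of_dvd_sq_add_self_add_one_middle hodd hperf ha hb hc hab hbc hc1 hcb.1 hcb.2
    · exact pow_le_of_dvd_sigma_one hodd hperf ha hb hc hab hbc hc1 (not_and.1 hcb)
  · have hb_pos := factorization_pos_of_mem_primeFactors hb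
    have hc_pos := factorization_pos_of_mem_primeFactors hc
    exact pow_le_of_two_le_factorization hperf ha hb hc hab hbc (by omega) (by omega)

end LargestPrimes

lemma lt_of_card_filter_lt_lt {α : Type*} [LinearOrder α] {s : Finset α} {x y : α}
    (h : (s.filter (y < ·)).card < (s.filter (x < ·)).card) : x < y := by
  by_contra! hyx
  exact h.not_ge (card_le_card (monotone_filter_right s fun _ _ hx => hyx.trans_lt hx))

lemma two_mul_rpow_lt {x : ℝ} (hx : 0 < x) :
    (2 * x) ^ ((11 : ℝ) / 18) <
      (2 : ℝ) ^ ((5 : ℝ) / 12) * (3 : ℝ) ^ ((7 : ℝ) / 36) * x ^ ((11 : ℝ) / 18) := by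
  have hpow : (2 : ℝ) ^ ((11 : ℝ) / 18) < 2 ^ ((5 : ℝ) / 12) * 3 ^ ((7 : ℝ) / 36) := by
    refine lt_of_pow_lt_pow_left₀ 36 (by positivity) ?_
    rw [mul_pow, ← Real.rpow_mul_natCast zero_le_two, ← Real.rpow_mul_natCast zero_le_two,
      ← Real.rpow_mul_natCast zero_le_three]
    norm_num
  rw [Real.mul_rpow zero_le_two hx.le]
  gcongr

theorem stmt_3_general {N a b c : ℕ} (hodd : Odd N) (hperf : N.Perfect)
    (ha : a ∈ N.primeFactors) (hb : b ∈ N.primeFactors) (hc : c ∈ N.primeFactors)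
    (hab : a < b) (hbc : b < c) : (a * b * c : ℝ) ≤ (2 * N : ℝ) ^ ((11 : ℝ) / 18) := by
  have h : (a * b * c : ℝ) ^ 18 ≤ (2 * N : ℝ) ^ 11 := by
    exact_mod_cast pow_le_of_perfect hodd hperf ha hb hc hab hbc
  refine le_of_pow_le_pow_left₀ (n := 18) (by norm_num) (by positivity) (h.trans_eq ?_)
  rw [← Real.rpow_mul_natCast (by positivity), ← Real.rpow_natCast]
  norm_num

/-- Let N be an odd perfect number with at least three distinct
prime divisors, with c, b, a its largest, second largest and third largest
prime divisors respectively. Then abc < 2^(5/12) · 3^(7/36) · N^(11/18). -/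
theorem stmt_3 (N : ℕ) (hodd : Odd N) (hperf : Nat.Perfect N)
    (hk : 3 ≤ N.primeFactors.card)
    (a b c : ℕ)
    (ha : a ∈ N.primeFactors) (hb : b ∈ N.primeFactors) (hc : c ∈ N.primeFactors)
    (ha2 : (N.primeFactors.filter (fun q => a < q)).card = 2)
    (hb1 : (N.primeFactors.filter (fun q => b < q)).card = 1)
    (hc0 : (N.primeFactors.filter (fun q => c < q)).card = 0) :
    (a * b * c : ℝ) < (2 : ℝ) ^ ((5 : ℝ) / 12) * (3 : ℝ) ^ ((7 : ℝ) / 36) *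
      (N : ℝ) ^ ((11 : ℝ) / 18) :=
  have hab : a < b := lt_of_card_filter_lt_lt (by rw [ha2, hb1]; norm_num)
  have hbc : b < c := lt_of_card_filter_lt_lt (by rw [hb1, hc0]; norm_num)
  (stmt_3_general hodd hperf ha hb hc hab hbc).trans_lt
    (two_mul_rpow_lt (Nat.cast_pos.2 hodd.pos))
end

section
/- There are no odd primes p, q, r such that p·r divides q² + q + 1, q divides p² + p + 1, p divides r + 1, and r ≡ 1 (mod 4). -/
/-!
If `p ∣ q² + q + 1` and `q ∣ p² + p + 1`, then `p` and `q` are coprime, so `pq` divides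
`p² + q² + p + q + 1`, and Vieta jumping forces the quotient to be `5`. Hence `p` and `q` are
neighbours in a sequence with `a (n + 1) + a (n - 1) = 5 * a n - 1`. For `1 < p < q`, let
`z ≤ w < p < q < q'` be consecutive terms, and write `q' = r * m`, which is possible because
`p * q' = q² + q + 1`. Divisors of numbers `n² + n + 1` are odd, so `p`, `r`, `m` and `z` are odd,
and `p ∣ r + 1` gives `r ≥ 2 * p - 1` and thus `m ≤ 12`. Reducing `r * m = q' = 23 * p - 7 - z`
modulo `p` gives `p ∣ m - 7 - z`. The right-hand side is odd, hence nonzero, and since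
`4 * z ≤ p + 1` it is too small unless `p = 3`, where `q' = 61`. If instead `q < p`, then `p * r`
already exceeds `q² + q + 1`.
-/

/-- The conic `x² + y² + x + y + 1 = k * x * y` on which Vieta jumping is carried out; `k` is the
quotient of the left-hand side by `x * y`. Its two points with a given `x` have second coordinates
adding up to `k * x - 1`. -/
def VietaConic (k x y : ℤ) : Prop :=
  x ^ 2 + y ^ 2 + x + y + 1 = k * x * y

namespace VietaConic

variable {k x y : ℤ}

theorem symm (h : VietaConic k x y) : VietaConic k y x := by
  unfold VietaConic at *
  linear_combination h

theorem jump (h : VietaConic k x y) : VietaConic k (k * x - 1 - y) x := by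
  unfold VietaConic at *
  linear_combination h

theorem mul_jump (h : VietaConic k x y) : y * (k * x - 1 - y) = x ^ 2 + x + 1 := by
  unfold VietaConic at h
  linear_combination -h

theorem jump_pos (h : VietaConic k x y) (hy : 0 < y) : 0 < k * x - 1 - y := by
  have hprod : 0 < y * (k * x - 1 - y) := by
    rw [h.mul_jump]
    nlinarith [sq_nonneg (x + 1)]
  exact pos_of_mul_pos_right hprod hy.le

theorem jump_le (h : VietaConic k x y) (hx : 0 < x) (hxy : x < y) : k * x - 1 - y ≤ x := by
  by_contra! hlt
  have hprod : (x + 1) * (x + 1) ≤ y * (k * x - 1 - y) := by gcongr <;> omega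
  linarith [h.mul_jump]

theorem eq_one_of_self (h : VietaConic k x x) (hx : 0 < x) : x = 1 := by
  unfold VietaConic at h
  have hdvd : x ∣ 1 := ⟨k * x - 2 * x - 2, by linear_combination h⟩
  exact Int.eq_one_of_dvd_one hx.le hdvd

theorem jump_lt (h : VietaConic k x y) (hx : 1 < x) (hxy : x < y) : k * x - 1 - y < x := by
  refine (h.jump_le (by omega) hxy).lt_of_ne fun heq => ?_
  have hself : VietaConic k x x := by simpa only [heq] using h.jump
  exact hx.ne' (hself.eq_one_of_self (by omega))

theorem eq_five_of_le {k x y : ℤ} (h : VietaConic k x y) (hx : 0 < x) (hxy : x ≤ y) : k = 5 := by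
  rcases hxy.eq_or_lt with rfl | hlt
  · obtain rfl := h.eq_one_of_self hx
    unfold VietaConic at h
    linarith
  · exact h.jump.eq_five_of_le (h.jump_pos (by omega)) (h.jump_le hx hlt)
termination_by y.toNat

theorem eq_five (h : VietaConic k x y) (hx : 0 < x) (hy : 0 < y) : k = 5 :=
  (le_total x y).elim (h.eq_five_of_le hx) (h.symm.eq_five_of_le hy)

theorem of_dvd (hx : 0 < x) (hy : 0 < y) (hxy : x ∣ y ^ 2 + y + 1) (hyx : y ∣ x ^ 2 + x + 1) :
    VietaConic 5 x y := by
  have hcop : IsCoprime x y :=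
    IsCoprime.of_isCoprime_of_dvd_right ⟨-(x + 1), 1, by ring⟩ hyx
  have hx_dvd : x ∣ x ^ 2 + y ^ 2 + x + y + 1 := by
    obtain ⟨a, ha⟩ := hxy
    exact ⟨x + 1 + a, by linear_combination ha⟩
  have hy_dvd : y ∣ x ^ 2 + y ^ 2 + x + y + 1 := by
    obtain ⟨b, hb⟩ := hyx
    exact ⟨y + 1 + b, by linear_combination hb⟩
  obtain ⟨k, hk⟩ := hcop.mul_dvd hx_dvd hy_dvd
  have hconic : VietaConic k x y := by
    unfold VietaConic
    linear_combination hk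
  rwa [hconic.eq_five hx hy] at hconic

end VietaConic

theorem odd_of_dvd_sq_add_self_add_one {d n : ℤ} (h : d ∣ n ^ 2 + n + 1) : Odd d := by
  have hodd : Odd (n ^ 2 + n + 1) := by
    convert (Int.even_mul_succ_self n).add_one using 1
    ring
  obtain ⟨c, hc⟩ := h
  rw [hc] at hodd
  exact (Int.odd_mul.mp hodd).1

theorem two_mul_le_add_one_of_odd_of_dvd {p r : ℤ} (hp : Odd p) (hr : Odd r) (hr0 : 0 < r)
    (h : p ∣ r + 1) : 2 * p ≤ r + 1 :=
  Int.le_of_dvd (by omega) <|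
    (Int.isCoprime_two_left.mpr hp).mul_dvd hr.add_one.two_dvd h

namespace VietaConic

theorem le_eight_of_dvd {w p m : ℤ} (h : VietaConic 5 w p) (hw : 0 < w) (hwp : w < p)
    (hm : 0 < m) (hm12 : m ≤ 12) (hm_odd : Odd m) (hdvd : p ∣ m - 7 - (5 * w - 1 - p)) :
    p ≤ 8 := by
  have hz : 0 < 5 * w - 1 - p := h.jump_pos (by omega)
  have hzw : 5 * w - 1 - p ≤ w := h.jump_le hw hwp
  have hz_odd : Odd (5 * w - 1 - p) :=
    odd_of_dvd_sq_add_self_add_one (Dvd.intro_left p h.mul_jump)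
  have hne : m - 7 - (5 * w - 1 - p) ≠ 0 := by
    rw [Int.odd_iff] at hm_odd hz_odd
    omega
  have hle : p ≤ |m - 7 - (5 * w - 1 - p)| :=
    Int.le_of_dvd (abs_pos.mpr hne) ((dvd_abs _ _).mpr hdvd)
  rcases abs_cases (m - 7 - (5 * w - 1 - p)) <;> omega

theorem eq_one_and_eq_three_of_le_eight {w p : ℤ} (h : VietaConic 5 w p) (hw : 0 < w)
    (hwp : w < p) (hp : p ≤ 8) : w = 1 ∧ p = 3 := by
  have hw2 : w ≤ 2 := by linarith [h.jump_le hw hwp]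
  unfold VietaConic at h
  interval_cases w <;> interval_cases p <;> omega

theorem not_dvd_jump {p q r : ℤ} (h : VietaConic 5 p q) (hp : 1 < p) (hpq : p < q)
    (hr : 0 < r) (hpr : p ∣ r + 1) : ¬ r ∣ 5 * q - 1 - p := by
  rintro ⟨m, hm⟩
  have hprod : q ^ 2 + q + 1 = p * (r * m) := by rw [← hm, h.symm.mul_jump]
  have hp_odd : Odd p := odd_of_dvd_sq_add_self_add_one ⟨r * m, hprod⟩
  have hr_odd : Odd r := odd_of_dvd_sq_add_self_add_one ⟨p * m, hprod.trans (by ring)⟩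
  have hm_odd : Odd m := odd_of_dvd_sq_add_self_add_one ⟨p * r, hprod.trans (by ring)⟩
  have hrp : 2 * p ≤ r + 1 := two_mul_le_add_one_of_odd_of_dvd hp_odd hr_odd hr hpr
  obtain ⟨w, hw⟩ : ∃ w, w = 5 * p - 1 - q := ⟨_, rfl⟩
  have hconic : VietaConic 5 w p := hw ▸ h.jump
  have hw0 : 0 < w := hw ▸ h.jump_pos (by omega)
  have hwp : w < p := hw ▸ h.jump_lt hp hpq
  have hrm : r * m = 24 * p - 6 - 5 * w := by omega
  have hm0 : 0 < m := pos_of_mul_pos_right (by omega : 0 < r * m) hr.le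
  have hm12 : m ≤ 12 := by
    by_contra! hm13
    have : (2 * p - 1) * 13 ≤ r * m := by gcongr <;> omega
    omega
  have hdvd : p ∣ m - 7 - (5 * w - 1 - p) := by
    obtain ⟨s, hs⟩ := hpr
    exact ⟨s * m - 23, by linear_combination m * hs - hrm⟩
  have hp8 : p ≤ 8 := hconic.le_eight_of_dvd hw0 hwp hm0 hm12 hm_odd hdvd
  obtain ⟨rfl, rfl⟩ := hconic.eq_one_and_eq_three_of_le_eight hw0 hwp hp8
  -- `r * m = 61` is prime, so `r` is `1` or `61`, neither of which is `-1` modulo `3`.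
  interval_cases m <;> omega

end VietaConic

theorem stmt_9_general (p q r : ℕ) (hp : p ≠ 1) :
    ¬ (p * r ∣ q ^ 2 + q + 1 ∧ q ∣ p ^ 2 + p + 1 ∧ p ∣ r + 1) := by
  rintro ⟨hprq, hqp, hpr⟩
  have hprod_pos : 0 < p * r := Nat.pos_of_dvd_of_pos hprq (by positivity)
  have hp0 : 0 < p := Nat.pos_of_mul_pos_right hprod_pos
  have hr0 : 0 < r := Nat.pos_of_mul_pos_left hprod_pos
  have hq0 : 0 < q := Nat.pos_of_dvd_of_pos hqp (by positivity)
  have hle : p * r ≤ q ^ 2 + q + 1 := Nat.le_of_dvd (by positivity) hprq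
  zify at *
  have hpq : (p : ℤ) ∣ q ^ 2 + q + 1 := dvd_of_mul_right_dvd hprq
  have hrq : (r : ℤ) ∣ q ^ 2 + q + 1 := dvd_of_mul_left_dvd hprq
  have hconic : VietaConic 5 p q := .of_dvd hp0 hq0 hpq hqp
  rcases lt_trichotomy (p : ℤ) q with hlt | heq | hgt
  · refine hconic.not_dvd_jump (by omega) hlt hr0 hpr ?_
    rwa [← mul_dvd_mul_iff_left hp0.ne', hconic.symm.mul_jump]
  · rw [← heq] at hconic
    exact hp (hconic.eq_one_of_self hp0)
  · have hrp := two_mul_le_add_one_of_odd_of_dvd (odd_of_dvd_sq_add_self_add_one hpq)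
      (odd_of_dvd_sq_add_self_add_one hrq) hr0 hpr
    nlinarith

/-- There are no odd primes p, q, r such that p·r ∣ q² + q + 1,
q ∣ p² + p + 1, p ∣ r + 1, and r ≡ 1 (mod 4). -/
theorem stmt_9 (p q r : ℕ) (hp : p.Prime) (hq : q.Prime) (hr : r.Prime)
    (hpodd : Odd p) (hqodd : Odd q) (hrodd : Odd r) :
    ¬ (p * r ∣ q ^ 2 + q + 1 ∧ q ∣ p ^ 2 + p + 1 ∧ p ∣ r + 1 ∧ r % 4 = 1) :=
  fun ⟨hprq, hqp, hpr, _⟩ => stmt_9_general p q r hp.ne_one ⟨hprq, hqp, hpr⟩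
end
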